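/- arXiv:1402.3879 — 2 statements merged into one kernel-verified Lean document; each statement's English description precedes it below -/
import Mathlib

section
/- Let T > 0, R, A, B > 0, and 0 < α, β < 1/2. Let u₀ ∈ C¹(ℝ²), u₁ : ℝ² → ℝ continuous, and F : ℝ² × [0, T] → ℝ continuous, satisfying |u₀(x)| ≤ A |x|^{−1/2−α}, |∇u₀(x)| ≤ A |x|^{−3/2−α}, and |u₁(x)| ≤ A |x|^{−3/2−α} whenever |x| > R, and |F(x,t)| ≤ B |x|^{−5/2} (|x| − t)^{−β} whenever t ∈ [0,T] and |x| > R + t. Define u(x,t) for t ∈ (0,T] by the representation formula u(x,t) = (1/(2π t²)) ∫_{B(x,t)} [t u₀(y) + t² u₁(y) + t ∇u₀(y)·(y − x)] / √(t² − |y−x|²) dy + (1/(2π)) ∫₀^{t} ∫_{B(x,t−s)} F(y,s) / √((t−s)² − |y−x|²) dy ds, and u(x,0) = u₀(x). Then there exists a constant C = C(α, β) ≥ 1, depending only on α and β, such that |u(x,t)| ≤ C |x|^{−1/2} [ A (|x| − t)^{−α} + B (|x| − t)^{−β} ] whenever t ∈ [0, T] and |x| > R + t. -/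
open MeasureTheory Set Metric

/-!
For `τ < |x|` the origin lies outside the disk `B(x, τ)`. In polar coordinates around the origin,
the kernel `(τ² - |y - x|²)^(-1/2)` on the circle `|y| = ρ` equals
`(2 |x| ρ)^(-1/2) (cos θ - c)^(-1/2)` with `c ≥ 0`. Writing `c = cos φ`, the bound
`cos θ - cos φ ≥ (2 / π²) (φ² - θ²)` and the scale invariance of `∫ (φ² - θ²)^(-1/2) dθ = π` over
`|θ| < φ` show that its integral in `θ` is bounded uniformly in `c`. A radial majorant `g(|y|)` of
the data therefore contributes at most a constant times
`|x|^(-1/2) ∫ g(ρ) ρ^(1/2) dρ` over `| ρ - |x| | < τ`, and only integrals of powers remain. For the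
forcing term these decouple in the variables `s` and `σ = ρ - s`, where `σ > |x| - t`.
-/

section

open Real

lemma two_div_pi_sq_mul_le_cos_sub_cos {θ φ : ℝ} (hθ : |θ| ≤ φ) (hφ : φ ≤ π / 2) :
    2 / π ^ 2 * (φ ^ 2 - θ ^ 2) ≤ cos θ - cos φ := by
  obtain ⟨hl, hr⟩ := abs_le.mp hθ
  have hsum : 2 / π * ((φ + θ) / 2) ≤ sin ((φ + θ) / 2) := mul_le_sin (by linarith) (by linarith)
  have hdiff : 2 / π * ((φ - θ) / 2) ≤ sin ((φ - θ) / 2) := mul_le_sin (by linarith) (by linarith)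
  have hprod := mul_le_mul hsum hdiff (mul_nonneg (by positivity) (by linarith))
    (sin_nonneg_of_nonneg_of_le_pi (by linarith) (by linarith))
  calc 2 / π ^ 2 * (φ ^ 2 - θ ^ 2)
      = 2 * (2 / π * ((φ + θ) / 2) * (2 / π * ((φ - θ) / 2))) := by ring
    _ ≤ 2 * (sin ((φ + θ) / 2) * sin ((φ - θ) / 2)) := by gcongr
    _ = cos θ - cos φ := by
      rw [cos_sub_cos, ← neg_sub φ θ, neg_div, sin_neg, add_comm φ θ]
      ring

lemma lintegral_inv_sqrt_sq_sub_sq_le {a : ℝ} (ha : 0 < a) :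
    ∫⁻ θ in Ioo (-a) a, ENNReal.ofReal (√(a ^ 2 - θ ^ 2))⁻¹ ≤ ENNReal.ofReal π := by
  have hderiv : ∀ θ ∈ Ioo (-a) a,
      HasDerivWithinAt (fun θ ↦ arcsin (θ / a)) (√(a ^ 2 - θ ^ 2))⁻¹ (Ioo (-a) a) θ := by
    rintro θ ⟨hl, hr⟩
    have hl' : -1 < θ / a := by rw [lt_div_iff₀ ha]; linarith
    have hr' : θ / a < 1 := (div_lt_one ha).mpr hr
    have hsq : a ^ 2 - θ ^ 2 = (1 - (θ / a) ^ 2) * a ^ 2 := by field_simp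
    rw [hsq, sqrt_mul' _ (sq_nonneg a), sqrt_sq ha.le, mul_inv, ← one_div, ← one_div a]
    exact ((hasDerivAt_arcsin hl'.ne' hr'.ne).comp θ
      ((hasDerivAt_id θ).div_const a)).hasDerivWithinAt
  have hmono : MonotoneOn (fun θ ↦ arcsin (θ / a)) (Ioo (-a) a) := fun θ _ θ' _ h ↦
    monotone_arcsin (div_le_div_of_nonneg_right h ha.le)
  rw [lintegral_deriv_eq_volume_image_of_monotoneOn measurableSet_Ioo hderiv hmono]
  calc volume ((fun θ ↦ arcsin (θ / a)) '' Ioo (-a) a)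
      ≤ volume (Icc (-(π / 2)) (π / 2)) :=
        measure_mono (image_subset_iff.mpr fun θ _ ↦ arcsin_mem_Icc _)
    _ = ENNReal.ofReal π := by rw [volume_Icc, sub_neg_eq_add, add_halves]

lemma inv_sqrt_cos_sub_cos_le {θ φ : ℝ} (hθ : |θ| < φ) (hφ : φ ≤ π / 2) :
    (√(cos θ - cos φ))⁻¹ ≤ π / √2 * (√(φ ^ 2 - θ ^ 2))⁻¹ := by
  have hpos : 0 < φ ^ 2 - θ ^ 2 := sub_pos.mpr (sq_lt_sq' (abs_lt.mp hθ).1 (abs_lt.mp hθ).2)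
  calc (√(cos θ - cos φ))⁻¹ ≤ (√(2 / π ^ 2 * (φ ^ 2 - θ ^ 2)))⁻¹ :=
        inv_anti₀ (by positivity) (sqrt_le_sqrt (two_div_pi_sq_mul_le_cos_sub_cos hθ.le hφ))
    _ = π / √2 * (√(φ ^ 2 - θ ^ 2))⁻¹ := by
      rw [sqrt_mul (by positivity), sqrt_div zero_le_two, sqrt_sq pi_nonneg, mul_inv, inv_div]

/- As `√a = 0` for `a < 0` and `0⁻¹ = 0`, the kernel `(√(τ ^ 2 - ‖y - x‖ ^ 2))⁻¹` vanishes outside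
the disk, and its integrals need not be restricted to the disk. -/
lemma inv_sqrt_cos_sub_eq_zero {c : ℝ} (hc : 1 ≤ c) (θ : ℝ) : (√(cos θ - c))⁻¹ = 0 := by
  rw [sqrt_eq_zero_of_nonpos (by linarith [cos_le_one θ]), inv_zero]

lemma lintegral_inv_sqrt_cos_sub_le {c : ℝ} (hc : 0 ≤ c) :
    ∫⁻ θ in Ioo (-π) π, ENNReal.ofReal (√(cos θ - c))⁻¹ ≤ ENNReal.ofReal (π ^ 2 / √2) := by
  rcases le_or_gt 1 c with hc₁ | hc₁
  · simp [inv_sqrt_cos_sub_eq_zero hc₁]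
  obtain ⟨φ, hφ₀, hφ, rfl⟩ : ∃ φ, 0 < φ ∧ φ ≤ π / 2 ∧ cos φ = c :=
    ⟨arccos c, arccos_pos.mpr hc₁, arccos_le_pi_div_two.mpr hc, cos_arccos (by linarith) hc₁.le⟩
  have hpointwise : ∀ θ ∈ Ioo (-π) π, ENNReal.ofReal (√(cos θ - cos φ))⁻¹ ≤
      (Ioo (-φ) φ).indicator
        (fun θ ↦ ENNReal.ofReal (π / √2) * ENNReal.ofReal (√(φ ^ 2 - θ ^ 2))⁻¹) θ := by
    intro θ hθ
    by_cases hmem : θ ∈ Ioo (-φ) φ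
    · rw [indicator_of_mem hmem, ← ENNReal.ofReal_mul (by positivity)]
      exact ENNReal.ofReal_le_ofReal (inv_sqrt_cos_sub_cos_le (abs_lt.mpr hmem) hφ)
    · have habs : φ ≤ |θ| := not_lt.mp fun h ↦ hmem (abs_lt.mp h)
      have hcos : cos θ ≤ cos φ := by
        rw [← cos_abs θ]
        exact cos_le_cos_of_nonneg_of_le_pi hφ₀.le (abs_le.mpr ⟨hθ.1.le, hθ.2.le⟩) habs
      rw [sqrt_eq_zero_of_nonpos (sub_nonpos.mpr hcos)]
      simp
  calc ∫⁻ θ in Ioo (-π) π, ENNReal.ofReal (√(cos θ - cos φ))⁻¹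
      ≤ ∫⁻ θ in Ioo (-φ) φ, ENNReal.ofReal (π / √2) * ENNReal.ofReal (√(φ ^ 2 - θ ^ 2))⁻¹ := by
        rw [← lintegral_indicator (measurableSet_Ioo (a := -φ))]
        exact (setLIntegral_mono' measurableSet_Ioo hpointwise).trans
          (setLIntegral_le_lintegral _ _)
    _ ≤ ENNReal.ofReal (π / √2) * ENNReal.ofReal π := by
        rw [lintegral_const_mul _ (by fun_prop)]
        gcongr
        exact lintegral_inv_sqrt_sq_sub_sq_le hφ₀
    _ = ENNReal.ofReal (π ^ 2 / √2) := by
        rw [← ENNReal.ofReal_mul (by positivity)]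
        congr 1
        ring

lemma exists_linearIsometryEquiv_complex_apply_norm {E : Type*} [NormedAddCommGroup E]
    [InnerProductSpace ℝ E] [FiniteDimensional ℝ E] (hE : Module.finrank ℝ E = 2) (x : E) :
    ∃ L : ℂ ≃ₗᵢ[ℝ] E, L ‖x‖ = x := by
  let e : ℂ ≃ₗᵢ[ℝ] E :=
    Complex.orthonormalBasisOneI.equiv (stdOrthonormalBasis ℝ E) (finCongr hE.symm)
  refine ⟨(rotation (Circle.exp (e.symm x).arg)).trans e, ?_⟩
  rw [LinearIsometryEquiv.trans_apply, rotation_apply, Circle.coe_exp, ← e.symm.norm_map x,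
    mul_comm, Complex.norm_mul_exp_arg_mul_I, e.apply_symm_apply]

lemma sq_sub_sq_norm_polarCoord_symm_sub {r ρ : ℝ} (hr : r ≠ 0) (hρ : ρ ≠ 0) (τ θ : ℝ) :
    τ ^ 2 - ‖Complex.polarCoord.symm (ρ, θ) - r‖ ^ 2 =
      2 * (r * ρ) * (cos θ - (r ^ 2 + ρ ^ 2 - τ ^ 2) / (2 * (r * ρ))) := by
  have hnorm : ‖Complex.polarCoord.symm (ρ, θ) - r‖ ^ 2 =
      ρ ^ 2 * (cos θ ^ 2 + sin θ ^ 2) - 2 * (r * ρ) * cos θ + r ^ 2 := by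
    simp only [Complex.polarCoord_symm_apply, Complex.sq_norm, Complex.normSq_apply,
      Complex.sub_re, Complex.sub_im, Complex.add_re, Complex.add_im, Complex.mul_re,
      Complex.mul_im, Complex.ofReal_re, Complex.ofReal_im, Complex.I_re, Complex.I_im]
    ring
  rw [hnorm, cos_sq_add_sin_sq]
  field_simp
  ring

lemma lintegral_inv_sqrt_sq_sub_sq_norm_polarCoord_le {r ρ τ : ℝ} (hτ : 0 ≤ τ) (hτr : τ < r)
    (hρ : 0 < ρ) :
    ∫⁻ θ in Ioo (-π) π,
        ENNReal.ofReal (√(τ ^ 2 - ‖Complex.polarCoord.symm (ρ, θ) - r‖ ^ 2))⁻¹ ≤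
      (Ioo (r - τ) (r + τ)).indicator (fun ρ ↦ ENNReal.ofReal (π ^ 2 / 2 * (√(r * ρ))⁻¹)) ρ := by
  have hr : 0 < r := hτ.trans_lt hτr
  set c := (r ^ 2 + ρ ^ 2 - τ ^ 2) / (2 * (r * ρ)) with hc
  have hfactor (θ : ℝ) :
      ENNReal.ofReal (√(τ ^ 2 - ‖Complex.polarCoord.symm (ρ, θ) - r‖ ^ 2))⁻¹ =
        ENNReal.ofReal (√(2 * (r * ρ)))⁻¹ * ENNReal.ofReal (√(cos θ - c))⁻¹ := by
    rw [sq_sub_sq_norm_polarCoord_symm_sub hr.ne' hρ.ne', sqrt_mul (by positivity), mul_inv,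
      ENNReal.ofReal_mul (by positivity)]
  simp only [hfactor]
  rw [lintegral_const_mul _ (by fun_prop)]
  by_cases hmem : ρ ∈ Ioo (r - τ) (r + τ)
  · have hc₀ : 0 ≤ c := div_nonneg (by nlinarith) (by positivity)
    rw [indicator_of_mem hmem]
    calc _ ≤ ENNReal.ofReal (√(2 * (r * ρ)))⁻¹ * ENNReal.ofReal (π ^ 2 / √2) := by
          gcongr
          exact lintegral_inv_sqrt_cos_sub_le hc₀
      _ = ENNReal.ofReal (π ^ 2 / 2 * (√(r * ρ))⁻¹) := by
          rw [← ENNReal.ofReal_mul (by positivity), sqrt_mul zero_le_two]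
          congr 1
          field_simp
          rw [sq_sqrt zero_le_two]
  · have hdist : τ ≤ |ρ - r| := not_lt.mp fun h ↦ hmem (Real.ball_eq_Ioo r τ ▸ h)
    have hc₁ : 1 ≤ c := by
      rw [hc, le_div_iff₀ (by positivity)]
      nlinarith [sq_le_sq' (by linarith [abs_nonneg (ρ - r)]) hdist, sq_abs (ρ - r)]
    simp [indicator_of_notMem hmem, inv_sqrt_cos_sub_eq_zero hc₁]

lemma lintegral_mul_inv_sqrt_sq_sub_sq_norm_sub_le_complex {r τ : ℝ} (hτ : 0 ≤ τ) (hτr : τ < r)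
    {g : ℝ → ENNReal} (hg : Measurable g) :
    ∫⁻ z : ℂ, g ‖z‖ * ENNReal.ofReal (√(τ ^ 2 - ‖z - r‖ ^ 2))⁻¹ ≤
      ENNReal.ofReal (π ^ 2 / 2 * (√r)⁻¹) *
        ∫⁻ ρ in Ioo (r - τ) (r + τ), g ρ * ENNReal.ofReal √ρ := by
  have hr : 0 < r := hτ.trans_lt hτr
  have hmeas : Measurable fun p : ℝ × ℝ ↦ ENNReal.ofReal p.1 •
      (g ‖Complex.polarCoord.symm p‖ *
        ENNReal.ofReal (√(τ ^ 2 - ‖Complex.polarCoord.symm p - r‖ ^ 2))⁻¹) := by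
    simp only [Complex.polarCoord_symm_apply]
    fun_prop
  have hcircle : ∀ ρ ∈ Ioi (0 : ℝ),
      ∫⁻ θ in Ioo (-π) π, ENNReal.ofReal ρ • (g ‖Complex.polarCoord.symm (ρ, θ)‖ *
        ENNReal.ofReal (√(τ ^ 2 - ‖Complex.polarCoord.symm (ρ, θ) - r‖ ^ 2))⁻¹) ≤
      (Ioo (r - τ) (r + τ)).indicator
        (fun ρ ↦ ENNReal.ofReal (π ^ 2 / 2 * (√r)⁻¹) * (g ρ * ENNReal.ofReal √ρ)) ρ := by
    intro ρ hρ
    have hρ : 0 < ρ := hρ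
    simp only [Complex.norm_polarCoord_symm, abs_of_pos hρ, smul_eq_mul, ← mul_assoc]
    rw [lintegral_const_mul _ (by simp only [Complex.polarCoord_symm_apply]; fun_prop)]
    refine (mul_le_mul_right
      (lintegral_inv_sqrt_sq_sub_sq_norm_polarCoord_le hτ hτr hρ) _).trans_eq ?_
    by_cases hmem : ρ ∈ Ioo (r - τ) (r + τ)
    · have hweight : ρ * (π ^ 2 / 2 * (√(r * ρ))⁻¹) = π ^ 2 / 2 * (√r)⁻¹ * √ρ := by
        have hsqrt : ρ * (√ρ)⁻¹ = √ρ := by rw [← div_eq_mul_inv, div_sqrt]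
        rw [sqrt_mul hr.le, mul_inv]
        linear_combination π ^ 2 / 2 * (√r)⁻¹ * hsqrt
      rw [indicator_of_mem hmem, indicator_of_mem hmem, mul_right_comm,
        ← ENNReal.ofReal_mul hρ.le, hweight, ENNReal.ofReal_mul (by positivity)]
      ring
    · rw [indicator_of_notMem hmem, indicator_of_notMem hmem, mul_zero]
  rw [← Complex.lintegral_comp_polarCoord_symm, polarCoord_target, Measure.volume_eq_prod,
    ← Measure.prod_restrict, lintegral_prod _ hmeas.aemeasurable,
    ← lintegral_const_mul _ (by fun_prop), ← lintegral_indicator measurableSet_Ioo]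
  exact (setLIntegral_mono' measurableSet_Ioi hcircle).trans (setLIntegral_le_lintegral _ _)

lemma lintegral_Ioi_rpow_neg_one_sub {α c : ℝ} (hα : 0 < α) (hc : 0 < c) :
    ∫⁻ ρ in Ioi c, ENNReal.ofReal (ρ ^ (-1 - α)) = ENNReal.ofReal (c ^ (-α) / α) := by
  have hexp : -1 - α < -1 := by linarith
  rw [← ofReal_integral_eq_lintegral_ofReal (integrableOn_Ioi_rpow_of_lt hexp hc)
    (ae_restrict_of_forall_mem measurableSet_Ioi fun ρ hρ ↦ rpow_nonneg (hc.trans hρ).le _),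
    integral_Ioi_rpow_of_lt hexp hc, show -1 - α + 1 = -α by ring, neg_div_neg_eq]

lemma lintegral_Ioo_rpow_neg_le {α a b : ℝ} (hα : 0 ≤ α) (ha : 0 < a) :
    ∫⁻ ρ in Ioo a b, ENNReal.ofReal (ρ ^ (-α)) ≤ ENNReal.ofReal (a ^ (-α) * (b - a)) := by
  calc ∫⁻ ρ in Ioo a b, ENNReal.ofReal (ρ ^ (-α))
      ≤ ∫⁻ _ in Ioo a b, ENNReal.ofReal (a ^ (-α)) :=
        setLIntegral_mono' measurableSet_Ioo fun ρ hρ ↦ ENNReal.ofReal_le_ofReal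
          (rpow_le_rpow_of_nonpos ha hρ.1.le (neg_nonpos.mpr hα))
    _ = ENNReal.ofReal (a ^ (-α) * (b - a)) := by
        rw [setLIntegral_const, volume_Ioo, ENNReal.ofReal_mul (by positivity)]

lemma lintegral_Ioi_comp_add_right (f : ℝ → ENNReal) (a c : ℝ) :
    ∫⁻ x in Ioi a, f (x + c) = ∫⁻ x in Ioi (a + c), f x := by
  rw [← (measurePreserving_add_right volume c).setLIntegral_comp_preimage_emb
    (measurableEmbedding_addRight c) f, preimage_add_const_Ioi, add_sub_cancel_right]

lemma rpow_mul_sqrt {a ρ : ℝ} (hρ : 0 < ρ) : ρ ^ a * √ρ = ρ ^ (a + 1 / 2) := by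
  rw [sqrt_eq_rpow, ← rpow_add hρ]

lemma lintegral_initialData_weight_le {α A r t : ℝ} (hα : 0 < α) (hA : 0 ≤ A) (ht : 0 ≤ t)
    (htr : t < r) :
    ∫⁻ ρ in Ioo (r - t) (r + t),
        ENNReal.ofReal (A * (t * ρ ^ (-(1 / 2) - α) + 2 * t ^ 2 * ρ ^ (-(3 / 2) - α)) * √ρ) ≤
      ENNReal.ofReal (A * (2 * (1 + 1 / α) * t ^ 2 * (r - t) ^ (-α))) := by
  have hδ : 0 < r - t := sub_pos.mpr htr
  have hsplit : ∀ ρ ∈ Ioo (r - t) (r + t),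
      ENNReal.ofReal (A * (t * ρ ^ (-(1 / 2) - α) + 2 * t ^ 2 * ρ ^ (-(3 / 2) - α)) * √ρ) =
        ENNReal.ofReal (A * t) * ENNReal.ofReal (ρ ^ (-α)) +
          ENNReal.ofReal (2 * A * t ^ 2) * ENNReal.ofReal (ρ ^ (-1 - α)) := by
    intro ρ hρ
    have hρ₀ : 0 < ρ := hδ.trans hρ.1
    have hslow : ρ ^ (-(1 / 2) - α) * √ρ = ρ ^ (-α) := by rw [rpow_mul_sqrt hρ₀]; ring_nf
    have hfast : ρ ^ (-(3 / 2) - α) * √ρ = ρ ^ (-1 - α) := by rw [rpow_mul_sqrt hρ₀]; ring_nf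
    rw [← ENNReal.ofReal_mul (by positivity), ← ENNReal.ofReal_mul (by positivity),
      ← ENNReal.ofReal_add (by positivity) (by positivity), ← hslow, ← hfast]
    ring_nf
  rw [setLIntegral_congr_fun measurableSet_Ioo hsplit, lintegral_add_left (by fun_prop),
    lintegral_const_mul _ (by fun_prop), lintegral_const_mul _ (by fun_prop)]
  calc _ ≤ ENNReal.ofReal (A * t) * ENNReal.ofReal ((r - t) ^ (-α) * (r + t - (r - t))) +
        ENNReal.ofReal (2 * A * t ^ 2) * ENNReal.ofReal ((r - t) ^ (-α) / α) := by
        gcongr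
        · exact lintegral_Ioo_rpow_neg_le hα.le hδ
        · exact (lintegral_mono_set Ioo_subset_Ioi_self).trans_eq
            (lintegral_Ioi_rpow_neg_one_sub hα hδ)
    _ = ENNReal.ofReal (A * (2 * (1 + 1 / α) * t ^ 2 * (r - t) ^ (-α))) := by
        rw [add_sub_sub_cancel, ← ENNReal.ofReal_mul (by positivity),
          ← ENNReal.ofReal_mul (by positivity),
          ← ENNReal.ofReal_add (by positivity) (by positivity)]
        ring_nf

lemma lintegral_duhamel_slice_le {B r s t β : ℝ} (hs : 0 ≤ s) (htr : t < r) :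
    ∫⁻ ρ in Ioo (r - (t - s)) (r + (t - s)),
        ENNReal.ofReal (B * ρ ^ (-(5 / 2) : ℝ) * (ρ - s) ^ (-β) * √ρ) ≤
      ∫⁻ σ in Ioi (r - t), ENNReal.ofReal (B * σ ^ (-β) * (s + σ) ^ (-2 : ℝ)) := by
  have hδ : 0 < r - t := sub_pos.mpr htr
  calc _ ≤ ∫⁻ ρ in Ioi (r - t + s),
        ENNReal.ofReal (B * ρ ^ (-(5 / 2) : ℝ) * (ρ - s) ^ (-β) * √ρ) := by
        rw [sub_add]
        exact lintegral_mono_set Ioo_subset_Ioi_self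
    _ = ∫⁻ σ in Ioi (r - t), ENNReal.ofReal (B * σ ^ (-β) * (s + σ) ^ (-2 : ℝ)) := by
        rw [← lintegral_Ioi_comp_add_right]
        refine setLIntegral_congr_fun measurableSet_Ioi fun σ hσ ↦ ?_
        have hpos : 0 < σ + s := add_pos_of_pos_of_nonneg (hδ.trans hσ) hs
        have hpow : (σ + s) ^ (-(5 / 2) : ℝ) * √(σ + s) = (s + σ) ^ (-2 : ℝ) := by
          rw [rpow_mul_sqrt hpos, add_comm σ]
          norm_num
        rw [add_sub_cancel_right, ← hpow]
        ring_nf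

lemma lintegral_lintegral_duhamel_weight_le {B r t β : ℝ} (hβ : 0 < β) (hB : 0 ≤ B) (htr : t < r) :
    ∫⁻ s in Ioo 0 t, ∫⁻ ρ in Ioo (r - (t - s)) (r + (t - s)),
        ENNReal.ofReal (B * ρ ^ (-(5 / 2) : ℝ) * (ρ - s) ^ (-β) * √ρ) ≤
      ENNReal.ofReal (B * ((r - t) ^ (-β) / β)) := by
  have hδ : 0 < r - t := sub_pos.mpr htr
  have hslice : ∀ σ ∈ Ioi (r - t),
      ∫⁻ s in Ioi 0, ENNReal.ofReal (B * σ ^ (-β) * (s + σ) ^ (-2 : ℝ)) =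
        ENNReal.ofReal B * ENNReal.ofReal (σ ^ (-1 - β)) := by
    intro σ hσ
    have hσ₀ : 0 < σ := hδ.trans hσ
    have hinner : ∫⁻ v in Ioi σ, ENNReal.ofReal (v ^ (-2 : ℝ)) = ENNReal.ofReal (σ ^ (-1 : ℝ)) := by
      simpa [show (-1 - 1 : ℝ) = -2 by norm_num] using lintegral_Ioi_rpow_neg_one_sub one_pos hσ₀
    rw [lintegral_Ioi_comp_add_right
      (fun v ↦ ENNReal.ofReal (B * σ ^ (-β) * v ^ (-2 : ℝ))), zero_add]
    simp only [ENNReal.ofReal_mul (p := B * σ ^ (-β)) (by positivity)]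
    rw [lintegral_const_mul _ (by fun_prop), hinner, ← ENNReal.ofReal_mul (by positivity),
      ← ENNReal.ofReal_mul hB, mul_assoc, ← rpow_add hσ₀, add_comm (-β), ← sub_eq_add_neg]
  calc _ ≤ ∫⁻ s in Ioi 0, ∫⁻ σ in Ioi (r - t),
        ENNReal.ofReal (B * σ ^ (-β) * (s + σ) ^ (-2 : ℝ)) :=
        (setLIntegral_mono' measurableSet_Ioo fun s hs ↦
          lintegral_duhamel_slice_le hs.1.le htr).trans (lintegral_mono_set Ioo_subset_Ioi_self)
    _ = ∫⁻ σ in Ioi (r - t), ∫⁻ s in Ioi 0,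
        ENNReal.ofReal (B * σ ^ (-β) * (s + σ) ^ (-2 : ℝ)) :=
        lintegral_lintegral_swap (by fun_prop)
    _ = ENNReal.ofReal B * ENNReal.ofReal ((r - t) ^ (-β) / β) := by
        rw [setLIntegral_congr_fun measurableSet_Ioi hslice, lintegral_const_mul _ (by fun_prop),
          lintegral_Ioi_rpow_neg_one_sub hβ hδ]
    _ = ENNReal.ofReal (B * ((r - t) ^ (-β) / β)) := (ENNReal.ofReal_mul hB).symm

lemma nonneg_of_abs_le_mul {a A w : ℝ} (h : |a| ≤ A * w) (hw : 0 < w) : 0 ≤ A :=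
  nonneg_of_mul_nonneg_left ((abs_nonneg a).trans h) hw

lemma abs_initialData_le {V : Type*} [NormedAddCommGroup V] [NormedSpace ℝ V]
    {u₀ u₁ A t a b : ℝ} {p : V →L[ℝ] ℝ} {v : V} (ht : 0 ≤ t) (hv : ‖v‖ ≤ t)
    (hu₀ : |u₀| ≤ A * a) (hp : ‖p‖ ≤ A * b) (hu₁ : |u₁| ≤ A * b) :
    |t * u₀ + t ^ 2 * u₁ + t * p v| ≤ A * (t * a + 2 * t ^ 2 * b) := by
  have hpv : |p v| ≤ A * b * t := p.le_of_opNorm_le_of_le hp hv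
  calc |t * u₀ + t ^ 2 * u₁ + t * p v|
      ≤ |t * u₀| + |t ^ 2 * u₁| + |t * p v| := abs_add_three _ _ _
    _ = t * |u₀| + t ^ 2 * |u₁| + t * |p v| := by
        simp only [abs_mul, abs_pow, abs_of_nonneg ht]
    _ ≤ t * (A * a) + t ^ 2 * (A * b) + t * (A * b * t) := by gcongr
    _ = A * (t * a + 2 * t ^ 2 * b) := by ring

lemma norm_setIntegral_add_const_le {X G : Type*} [MeasurableSpace X] [NormedAddCommGroup G]
    [NormedSpace ℝ G] {μ : Measure X} {s : Set X} (hs : μ s ≠ ⊤) {f : X → G} {M : ℝ} (hM : 0 ≤ M)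
    (hf : ∫⁻ y in s, ‖f y‖ₑ ∂μ ≤ ENNReal.ofReal M) (c : G) :
    ‖∫ y in s, (f y + c) ∂μ‖ ≤ M + ‖c‖ * μ.real s := by
  rw [← toReal_enorm (∫ y in s, (f y + c) ∂μ)]
  refine ENNReal.toReal_le_of_le_ofReal (by positivity) ?_
  calc ‖∫ y in s, (f y + c) ∂μ‖ₑ ≤ ∫⁻ y in s, ‖f y + c‖ₑ ∂μ := enorm_integral_le_lintegral_enorm _
    _ ≤ ∫⁻ y in s, (‖f y‖ₑ + ‖c‖ₑ) ∂μ := lintegral_mono fun y ↦ enorm_add_le _ _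
    _ = (∫⁻ y in s, ‖f y‖ₑ ∂μ) + ‖c‖ₑ * μ s := by
        rw [lintegral_add_right _ measurable_const, setLIntegral_const]
    _ ≤ ENNReal.ofReal M + ‖c‖ₑ * μ s := by gcongr
    _ = ENNReal.ofReal (M + ‖c‖ * μ.real s) := by
        rw [ENNReal.ofReal_add hM (by positivity), ENNReal.ofReal_mul (norm_nonneg c),
          ofReal_measureReal hs, ofReal_norm]

variable {E : Type*} [NormedAddCommGroup E] [InnerProductSpace ℝ E] [FiniteDimensional ℝ E]
  [MeasurableSpace E] [BorelSpace E]

theorem lintegral_mul_inv_sqrt_sq_sub_sq_norm_sub_le (hE : Module.finrank ℝ E = 2) {x : E} {τ : ℝ}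
    (hτ : 0 ≤ τ) (hτx : τ < ‖x‖) {g : ℝ → ENNReal} (hg : Measurable g) :
    ∫⁻ y : E, g ‖y‖ * ENNReal.ofReal (√(τ ^ 2 - ‖y - x‖ ^ 2))⁻¹ ≤
      ENNReal.ofReal (π ^ 2 / 2 * ‖x‖ ^ (-(1 / 2) : ℝ)) *
        ∫⁻ ρ in Ioo (‖x‖ - τ) (‖x‖ + τ), g ρ * ENNReal.ofReal √ρ := by
  obtain ⟨L, hL⟩ := exists_linearIsometryEquiv_complex_apply_norm hE x
  have hdist (z : ℂ) : ‖L z - x‖ = ‖z - ‖x‖‖ := by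
    rw [← L.norm_map (z - ‖x‖), map_sub, hL]
  rw [rpow_neg (norm_nonneg x), ← sqrt_eq_rpow, ← L.measurePreserving.lintegral_comp (by fun_prop)]
  simp only [hdist, L.norm_map]
  exact lintegral_mul_inv_sqrt_sq_sub_sq_norm_sub_le_complex hτ hτx hg

lemma lintegral_ball_enorm_div_sqrt_le (hE : Module.finrank ℝ E = 2) {x : E} {τ : ℝ}
    (hτ : 0 ≤ τ) (hτx : τ < ‖x‖) {f : E → ℝ} {g : ℝ → ℝ} (hg : Measurable g)
    (hfg : ∀ y ∈ ball x τ, |f y| ≤ g ‖y‖) :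
    ∫⁻ y in ball x τ, ‖f y / √(τ ^ 2 - ‖y - x‖ ^ 2)‖ₑ ≤
      ENNReal.ofReal (π ^ 2 / 2 * ‖x‖ ^ (-(1 / 2) : ℝ)) *
        ∫⁻ ρ in Ioo (‖x‖ - τ) (‖x‖ + τ), ENNReal.ofReal (g ρ * √ρ) := by
  have hpointwise : ∀ y ∈ ball x τ, ‖f y / √(τ ^ 2 - ‖y - x‖ ^ 2)‖ₑ ≤
      ENNReal.ofReal (g ‖y‖) * ENNReal.ofReal (√(τ ^ 2 - ‖y - x‖ ^ 2))⁻¹ := by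
    intro y hy
    rw [div_eq_mul_inv, enorm_mul, enorm_eq_ofReal_abs, enorm_of_nonneg (by positivity)]
    gcongr
    exact hfg y hy
  simp only [ENNReal.ofReal_mul' (sqrt_nonneg _)]
  exact (setLIntegral_mono' measurableSet_ball hpointwise).trans <|
    (setLIntegral_le_lintegral _ _).trans <|
    lintegral_mul_inv_sqrt_sq_sub_sq_norm_sub_le hE hτ hτx hg.ennreal_ofReal

/-- `∫₀ᵗ ∫_{B(x, t - s)} F(y, s) / √((t - s)² - |y - x|²) dy ds`, up to the factor `1 / (2π)` the
solution at `(x, t)` of the wave equation in the plane with forcing `F` and zero Cauchy data. -/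
noncomputable def duhamelIntegral (F : E → ℝ → ℝ) (x : E) (t : ℝ) : ℝ :=
  ∫ s in Ioo 0 t, ∫ y in ball x (t - s), F y s / √((t - s) ^ 2 - ‖y - x‖ ^ 2)

/-- The representation formula for the wave equation in the plane with Cauchy data `(u₀, u₁)` and
forcing `F`. The Duhamel term stands under the integral over the disk, of area `π t²`, so that it
enters with weight `1 / (4π)`, half of the usual one. -/
noncomputable def waveRepresentation (u₀ u₁ : E → ℝ) (F : E → ℝ → ℝ) (x : E) (t : ℝ) : ℝ :=
  1 / (2 * π * t ^ 2) *
    ∫ y in ball x t, ((t * u₀ y + t ^ 2 * u₁ y + t * fderiv ℝ u₀ y (y - x)) /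
      √(t ^ 2 - ‖y - x‖ ^ 2) + 1 / (2 * π) * duhamelIntegral F x t)

lemma lintegral_ball_enorm_initialData_le (hE : Module.finrank ℝ E = 2) {α A t : ℝ} {x : E}
    (hα : 0 < α) (hA : 0 ≤ A) (ht : 0 ≤ t) (htx : t < ‖x‖) {u₀ u₁ : E → ℝ}
    (hu₀ : ∀ y ∈ ball x t, |u₀ y| ≤ A * ‖y‖ ^ (-(1 / 2) - α))
    (hdu₀ : ∀ y ∈ ball x t, ‖fderiv ℝ u₀ y‖ ≤ A * ‖y‖ ^ (-(3 / 2) - α))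
    (hu₁ : ∀ y ∈ ball x t, |u₁ y| ≤ A * ‖y‖ ^ (-(3 / 2) - α)) :
    ∫⁻ y in ball x t, ‖(t * u₀ y + t ^ 2 * u₁ y + t * fderiv ℝ u₀ y (y - x)) /
        √(t ^ 2 - ‖y - x‖ ^ 2)‖ₑ ≤
      ENNReal.ofReal (π ^ 2 * (1 + 1 / α) * t ^ 2 *
        (‖x‖ ^ (-(1 / 2) : ℝ) * (A * (‖x‖ - t) ^ (-α)))) := by
  refine (lintegral_ball_enorm_div_sqrt_le hE ht htx
    (g := fun ρ ↦ A * (t * ρ ^ (-(1 / 2) - α) + 2 * t ^ 2 * ρ ^ (-(3 / 2) - α))) (by fun_prop)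
    fun y hy ↦ abs_initialData_le ht (mem_ball_iff_norm.mp hy).le
      (hu₀ y hy) (hdu₀ y hy) (hu₁ y hy)).trans ?_
  refine (mul_le_mul_right (lintegral_initialData_weight_le hα hA ht htx) _).trans_eq ?_
  rw [← ENNReal.ofReal_mul (by positivity)]
  ring_nf

lemma abs_duhamelIntegral_le (hE : Module.finrank ℝ E = 2) {β B t : ℝ} {x : E} (hβ : 0 < β)
    (hB : 0 ≤ B) (htx : t < ‖x‖) {F : E → ℝ → ℝ}
    (hF : ∀ s ∈ Ioo 0 t, ∀ y ∈ ball x (t - s),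
      |F y s| ≤ B * ‖y‖ ^ (-(5 / 2) : ℝ) * (‖y‖ - s) ^ (-β)) :
    |duhamelIntegral F x t| ≤
      π ^ 2 / (2 * β) * (‖x‖ ^ (-(1 / 2) : ℝ) * (B * (‖x‖ - t) ^ (-β))) := by
  have : 0 < ‖x‖ - t := sub_pos.mpr htx
  have hslice : ∀ s ∈ Ioo 0 t,
      ‖∫ y in ball x (t - s), F y s / √((t - s) ^ 2 - ‖y - x‖ ^ 2)‖ₑ ≤
        ENNReal.ofReal (π ^ 2 / 2 * ‖x‖ ^ (-(1 / 2) : ℝ)) *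
          ∫⁻ ρ in Ioo (‖x‖ - (t - s)) (‖x‖ + (t - s)),
            ENNReal.ofReal (B * ρ ^ (-(5 / 2) : ℝ) * (ρ - s) ^ (-β) * √ρ) := by
    rintro s ⟨hs, hst⟩
    exact (enorm_integral_le_lintegral_enorm _).trans <|
      lintegral_ball_enorm_div_sqrt_le hE (sub_nonneg.mpr hst.le) (by linarith)
        (g := fun ρ ↦ B * ρ ^ (-(5 / 2) : ℝ) * (ρ - s) ^ (-β)) (by fun_prop) (hF s ⟨hs, hst⟩)
  rw [← Real.norm_eq_abs, ← toReal_enorm]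
  refine ENNReal.toReal_le_of_le_ofReal (by positivity) ?_
  calc ‖duhamelIntegral F x t‖ₑ
      ≤ ∫⁻ s in Ioo 0 t, ‖∫ y in ball x (t - s), F y s / √((t - s) ^ 2 - ‖y - x‖ ^ 2)‖ₑ :=
        enorm_integral_le_lintegral_enorm _
    _ ≤ ENNReal.ofReal (π ^ 2 / 2 * ‖x‖ ^ (-(1 / 2) : ℝ)) *
        ENNReal.ofReal (B * ((‖x‖ - t) ^ (-β) / β)) := by
        refine (setLIntegral_mono' measurableSet_Ioo hslice).trans ?_
        rw [lintegral_const_mul' _ _ ENNReal.ofReal_ne_top]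
        gcongr
        exact lintegral_lintegral_duhamel_weight_le hβ hB htx
    _ = _ := by
        rw [← ENNReal.ofReal_mul (by positivity)]
        ring_nf

lemma volume_real_ball_of_finrank_eq_two (hE : Module.finrank ℝ E = 2) (x : E) {t : ℝ}
    (ht : 0 ≤ t) : volume.real (ball x t) = π * t ^ 2 := by
  have : Nontrivial E := Module.nontrivial_of_finrank_pos (R := ℝ) (by lia)
  rw [measureReal_def, InnerProductSpace.volume_ball_of_dim_even (k := 1) (by simp [hE]) x t, hE]
  simp [ht, pi_nonneg, mul_comm]

theorem abs_waveRepresentation_le (hE : Module.finrank ℝ E = 2) {α β A B t : ℝ} {x : E}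
    (hα : 0 < α) (hβ : 0 < β) (hA : 0 ≤ A) (hB : 0 ≤ B) (ht : 0 < t) (htx : t < ‖x‖)
    {u₀ u₁ : E → ℝ} {F : E → ℝ → ℝ}
    (hu₀ : ∀ y ∈ ball x t, |u₀ y| ≤ A * ‖y‖ ^ (-(1 / 2) - α))
    (hdu₀ : ∀ y ∈ ball x t, ‖fderiv ℝ u₀ y‖ ≤ A * ‖y‖ ^ (-(3 / 2) - α))
    (hu₁ : ∀ y ∈ ball x t, |u₁ y| ≤ A * ‖y‖ ^ (-(3 / 2) - α))
    (hF : ∀ s ∈ Ioo 0 t, ∀ y ∈ ball x (t - s),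
      |F y s| ≤ B * ‖y‖ ^ (-(5 / 2) : ℝ) * (‖y‖ - s) ^ (-β)) :
    |waveRepresentation u₀ u₁ F x t| ≤
      π / 2 * (1 + 1 / α) * (‖x‖ ^ (-(1 / 2) : ℝ) * (A * (‖x‖ - t) ^ (-α))) +
        π / (8 * β) * (‖x‖ ^ (-(1 / 2) : ℝ) * (B * (‖x‖ - t) ^ (-β))) := by
  have : 0 < ‖x‖ - t := sub_pos.mpr htx
  have hdata := lintegral_ball_enorm_initialData_le hE hα hA ht.le htx hu₀ hdu₀ hu₁
  have hforcing := abs_duhamelIntegral_le hE hβ hB htx hF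
  set D := ‖x‖ ^ (-(1 / 2) : ℝ) * (A * (‖x‖ - t) ^ (-α))
  set J := duhamelIntegral F x t
  calc |waveRepresentation u₀ u₁ F x t|
      ≤ 1 / (2 * π * t ^ 2) *
          (π ^ 2 * (1 + 1 / α) * t ^ 2 * D + |1 / (2 * π) * J| * (π * t ^ 2)) := by
        rw [waveRepresentation, abs_mul, abs_of_pos (by positivity),
          ← volume_real_ball_of_finrank_eq_two hE x ht.le]
        gcongr
        exact norm_setIntegral_add_const_le measure_ball_lt_top.ne (by positivity) hdata _
    _ = π / 2 * (1 + 1 / α) * D + |J| / (4 * π) := by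
        rw [abs_mul, abs_of_pos (a := 1 / (2 * π)) (by positivity)]
        field_simp
        ring
    _ ≤ π / 2 * (1 + 1 / α) * D +
          π ^ 2 / (2 * β) * (‖x‖ ^ (-(1 / 2) : ℝ) * (B * (‖x‖ - t) ^ (-β))) / (4 * π) := by
        gcongr
    _ = _ := by
        field_simp
        ring

end

theorem stmt_6_general {E : Type*} [NormedAddCommGroup E] [InnerProductSpace ℝ E]
    [FiniteDimensional ℝ E] [MeasurableSpace E] [BorelSpace E] (hE : Module.finrank ℝ E = 2)
    (α β : ℝ) (hα : 0 < α) (hβ : 0 < β) :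
    ∃ C : ℝ, 1 ≤ C ∧
      ∀ (T R A B : ℝ), 0 ≤ R →
      ∀ (u₀ u₁ : E → ℝ) (F : E → ℝ → ℝ) (u : E → ℝ → ℝ),
        Differentiable ℝ u₀ →
        AEStronglyMeasurable u₁ →
        AEStronglyMeasurable (fun p : E × ℝ ↦ F p.1 p.2) (volume.restrict (univ ×ˢ Icc 0 T)) →
        (∀ x, R < ‖x‖ → |u₀ x| ≤ A * ‖x‖ ^ (-(1 / 2) - α)) →
        (∀ x, R < ‖x‖ → ‖fderiv ℝ u₀ x‖ ≤ A * ‖x‖ ^ (-(3 / 2) - α)) →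
        (∀ x, R < ‖x‖ → |u₁ x| ≤ A * ‖x‖ ^ (-(3 / 2) - α)) →
        (∀ x, ∀ t ∈ Icc 0 T, R + t < ‖x‖ →
          |F x t| ≤ B * ‖x‖ ^ (-(5 / 2) : ℝ) * (‖x‖ - t) ^ (-β)) →
        (∀ x, u x 0 = u₀ x) →
        (∀ x, ∀ t ∈ Ioc 0 T, u x t = waveRepresentation u₀ u₁ F x t) →
        ∀ x, ∀ t ∈ Icc 0 T, R + t < ‖x‖ →
          |u x t| ≤ C * ‖x‖ ^ (-(1 / 2) : ℝ) *
            (A * (‖x‖ - t) ^ (-α) + B * (‖x‖ - t) ^ (-β)) := by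
  set Cα := Real.pi / 2 * (1 + 1 / α)
  set Cβ := Real.pi / (8 * β)
  have hCα : 1 ≤ Cα := one_le_mul_of_one_le_of_one_le
    ((one_le_div two_pos).mpr Real.two_le_pi) (le_add_of_nonneg_right (by positivity))
  have hCβ : 0 ≤ Cβ := by positivity
  refine ⟨Cα + Cβ, le_add_of_le_of_nonneg hCα hCβ, ?_⟩
  intro T R A B hR u₀ u₁ F u _ _ _ hu₀ hdu₀ hu₁ hF hinit hrep x t ht hxt
  have ht₀ : 0 ≤ t := ht.1
  have hx : 0 < ‖x‖ := by linarith
  have hδ : 0 < ‖x‖ - t := by linarith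
  have hA : 0 ≤ A := nonneg_of_abs_le_mul (hu₀ x (by linarith)) (by positivity)
  have hB : 0 ≤ B :=
    nonneg_of_abs_le_mul ((hF x t ht hxt).trans_eq (mul_assoc _ _ _)) (by positivity)
  set D := ‖x‖ ^ (-(1 / 2) : ℝ) * (A * (‖x‖ - t) ^ (-α)) with hD
  set G := ‖x‖ ^ (-(1 / 2) : ℝ) * (B * (‖x‖ - t) ^ (-β))
  have hD₀ : 0 ≤ D := by positivity
  have hG₀ : 0 ≤ G := by positivity
  suffices hsplit : |u x t| ≤ Cα * D + Cβ * G by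
    calc |u x t| ≤ Cα * D + Cβ * G := hsplit
      _ ≤ (Cα + Cβ) * D + (Cα + Cβ) * G := by gcongr <;> linarith
      _ = _ := by ring
  rcases ht₀.eq_or_lt with rfl | htpos
  · calc |u x 0| ≤ A * ‖x‖ ^ (-(1 / 2) - α) := hinit x ▸ hu₀ x (by linarith)
      _ = D := by
        rw [hD, sub_zero, sub_eq_add_neg, Real.rpow_add hx]
        ring
      _ ≤ Cα * D + Cβ * G :=
        le_add_of_le_of_nonneg (le_mul_of_one_le_left hD₀ hCα) (by positivity)
  · have hdependence {τ : ℝ} {y : E} (hy : y ∈ ball x τ) : ‖x‖ < ‖y‖ + τ :=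
      norm_lt_of_mem_ball (mem_ball_comm.mp hy)
    have hexterior : ∀ y ∈ ball x t, R < ‖y‖ := fun y hy ↦ by linarith [hdependence hy]
    rw [hrep x t ⟨htpos, ht.2⟩]
    exact abs_waveRepresentation_le hE hα hβ hA hB htpos (by linarith)
      (fun y hy ↦ hu₀ y (hexterior y hy)) (fun y hy ↦ hdu₀ y (hexterior y hy))
      (fun y hy ↦ hu₁ y (hexterior y hy))
      fun s hs y hy ↦ hF y s ⟨hs.1.le, hs.2.le.trans ht.2⟩ (by linarith [hdependence hy])

/-- Lemma 6.1 (Lemma `lm1`): decay estimate for the solution of the linear wave equation on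
`ℝ²` given by the standard representation formula, under point-wise decay assumptions on the
data `(u₀, u₁)` and the forcing term `F`. The constant `C ≥ 1` depends only on `α` and `β`. -/
theorem stmt_6 (α β : ℝ) (hα : 0 < α) (hα' : α < 1 / 2) (hβ : 0 < β) (hβ' : β < 1 / 2) :
    ∃ C : ℝ, 1 ≤ C ∧
      ∀ (T R A B : ℝ), 0 < T → 0 < R → 0 < A → 0 < B →
      ∀ (u₀ u₁ : EuclideanSpace ℝ (Fin 2) → ℝ)
        (F : EuclideanSpace ℝ (Fin 2) → ℝ → ℝ)
        (u : EuclideanSpace ℝ (Fin 2) → ℝ → ℝ),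
        ContDiff ℝ 1 u₀ →
        Continuous u₁ →
        ContinuousOn (fun p : EuclideanSpace ℝ (Fin 2) × ℝ => F p.1 p.2)
          (Set.univ ×ˢ Set.Icc 0 T) →
        (∀ x : EuclideanSpace ℝ (Fin 2), R < ‖x‖ →
          |u₀ x| ≤ A * ‖x‖ ^ (-(1 / 2) - α)) →
        (∀ x : EuclideanSpace ℝ (Fin 2), R < ‖x‖ →
          ‖fderiv ℝ u₀ x‖ ≤ A * ‖x‖ ^ (-(3 / 2) - α)) →
        (∀ x : EuclideanSpace ℝ (Fin 2), R < ‖x‖ →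
          |u₁ x| ≤ A * ‖x‖ ^ (-(3 / 2) - α)) →
        (∀ (x : EuclideanSpace ℝ (Fin 2)) (t : ℝ), t ∈ Set.Icc 0 T → R + t < ‖x‖ →
          |F x t| ≤ B * ‖x‖ ^ (-(5 / 2) : ℝ) * (‖x‖ - t) ^ (-β)) →
        (∀ x : EuclideanSpace ℝ (Fin 2), u x 0 = u₀ x) →
        (∀ (x : EuclideanSpace ℝ (Fin 2)) (t : ℝ), t ∈ Set.Ioc 0 T →
          u x t =
            (1 / (2 * Real.pi * t ^ 2)) *
              ∫ y in Metric.ball x t,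
                (t * u₀ y + t ^ 2 * u₁ y + t * (fderiv ℝ u₀ y (y - x))) /
                  Real.sqrt (t ^ 2 - ‖y - x‖ ^ 2)
            + (1 / (2 * Real.pi)) *
              ∫ s in Set.Ioo 0 t, ∫ y in Metric.ball x (t - s),
                F y s / Real.sqrt ((t - s) ^ 2 - ‖y - x‖ ^ 2)) →
        ∀ (x : EuclideanSpace ℝ (Fin 2)) (t : ℝ), t ∈ Set.Icc 0 T → R + t < ‖x‖ →
          |u x t| ≤ C * ‖x‖ ^ (-(1 / 2) : ℝ) *
            (A * (‖x‖ - t) ^ (-α) + B * (‖x‖ - t) ^ (-β)) := by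
  obtain ⟨C, hC, hbound⟩ := stmt_6_general finrank_euclideanSpace_fin α β hα hβ
  exact ⟨C, hC, fun T R A B _ hR _ _ u₀ u₁ F u hu₀ hu₁ hF ↦ hbound T R A B hR.le u₀ u₁ F u
    (hu₀.differentiable one_ne_zero) hu₁.aestronglyMeasurable
    (hF.aestronglyMeasurable (MeasurableSet.univ.prod measurableSet_Icc))⟩
end

section
/- Let R, A > 0 and 0 < α < 1/2. Let g : ℝ² → ℝ be measurable with |g(y)| ≤ A |y|^{−3/2−α} for all |y| > R. Then there is a constant C = C(α), depending only on α, such that for every t > 0 and every x ∈ ℝ² with |x| > R + t, (1/(2π)) ∫_{B(x,t)} |g(y)| / √(t² − |y−x|²) dy ≤ C · A · |x|^{−1/2} (|x| − t)^{−α}. -/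
open MeasureTheory Set Metric

open Module
open scoped Real ENNReal

/-!
Write `r = ‖x‖`. In polar coordinates about the origin, the circle of radius `ρ` meets `B(x, t)` in
an arc `|θ| < s` only if `|ρ - r| < t`, and `s ≤ π / 2` because `t < r`. By the law of cosines
`t² - ‖y - x‖² = 2rρ (cos θ - cos s)`, and Jordan's inequality bounds this below by
`(4rρ / π²) (s² - θ²)`. Since `∫ dθ / √(s² - θ²) = π` whatever `s` is, the kernel integrates over
the arc to at most `π² / (2√(rρ))`. The planar integral of a radial function `φ` against the kernel
is thus at most `π² / (2√r) * ∫ φ(ρ) √ρ dρ`, and for `φ(ρ) = A ρ ^ (-3/2 - α)` the remaining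
integral is a power integral over `ρ > r - t`.
-/

/-- The kernel `(s² - d²)^{-1/2}` of Abel's integral equation and, up to the factor `1 / (2π)`, of
the planar wave propagator at time `s`. It vanishes for `|s| ≤ |d|`, since then the square root is
`0` and so is its inverse. -/
noncomputable def abelKernel (s d : ℝ) : ℝ≥0∞ := ENNReal.ofReal (1 / √(s ^ 2 - d ^ 2))

section AbelKernel

variable {s d : ℝ}

@[fun_prop]
lemma measurable_abelKernel (s : ℝ) : Measurable (abelKernel s) := by
  unfold abelKernel
  fun_prop

lemma abelKernel_eq_zero (h : |s| ≤ |d|) : abelKernel s d = 0 := by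
  rw [abelKernel, Real.sqrt_eq_zero_of_nonpos (sub_nonpos.2 (sq_le_sq.2 h)), div_zero,
    ENNReal.ofReal_zero]

lemma abelKernel_le_mul_abelKernel {t e c : ℝ} (hc : 0 < c) (hd : |d| < s)
    (h : c * (s ^ 2 - d ^ 2) ≤ t ^ 2 - e ^ 2) :
    abelKernel t e ≤ ENNReal.ofReal (1 / √c) * abelKernel s d := by
  have hpos : 0 < s ^ 2 - d ^ 2 := sub_pos.2 (sq_lt_sq.2 (hd.trans_le (le_abs_self s)))
  rw [abelKernel, abelKernel, ← ENNReal.ofReal_mul (by positivity), one_div_mul_one_div,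
    ← Real.sqrt_mul hc.le]
  gcongr

lemma hasDerivAt_arcsin_div (hd : d ∈ Ioo (-s) s) :
    HasDerivAt (fun x ↦ Real.arcsin (x / s)) (1 / √(s ^ 2 - d ^ 2)) d := by
  have hs : 0 < s := by linarith [hd.1, hd.2]
  have hne_neg_one : d / s ≠ -1 := by
    rw [Ne, div_eq_iff hs.ne', neg_one_mul]
    exact hd.1.ne'
  have hne_one : d / s ≠ 1 := by
    rw [Ne, div_eq_one_iff_eq hs.ne']
    exact hd.2.ne
  have hsqrt : √(s ^ 2 - d ^ 2) = √(1 - (d / s) ^ 2) * s := by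
    rw [← Real.sqrt_mul_self hs.le, ← Real.sqrt_mul' _ (mul_self_nonneg s),
      Real.sqrt_mul_self hs.le]
    congr 1
    field_simp
  rw [hsqrt, ← one_div_mul_one_div]
  exact (Real.hasDerivAt_arcsin hne_neg_one hne_one).comp d ((hasDerivAt_id d).div_const s)

lemma image_arcsin_div (hs : 0 < s) :
    (fun x ↦ Real.arcsin (x / s)) '' Ioo (-s) s = Ioo (-(π / 2)) (π / 2) := by
  ext y
  constructor
  · rintro ⟨x, hx, rfl⟩
    exact ⟨Real.neg_pi_div_two_lt_arcsin.2 ((lt_div_iff₀ hs).2 (by linarith [hx.1])),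
      Real.arcsin_lt_pi_div_two.2 ((div_lt_one hs).2 hx.2)⟩
  · intro hy
    have hsin : Real.sin y ∈ Ioo (-1) 1 := by
      rw [← Real.arcsin_sin hy.1.le hy.2.le] at hy
      exact ⟨Real.neg_pi_div_two_lt_arcsin.1 hy.1, Real.arcsin_lt_pi_div_two.1 hy.2⟩
    refine ⟨Real.sin y * s, ⟨by nlinarith [hsin.1], by nlinarith [hsin.2]⟩, ?_⟩
    simp only [mul_div_cancel_right₀ _ hs.ne', Real.arcsin_sin hy.1.le hy.2.le]

lemma lintegral_abelKernel (hs : 0 < s) : ∫⁻ d, abelKernel s d = ENNReal.ofReal π := by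
  have hmono : MonotoneOn (fun x ↦ Real.arcsin (x / s)) (Ioo (-s) s) := fun x _ y _ hxy ↦
    Real.monotone_arcsin (by gcongr)
  have hsupp : Function.support (abelKernel s) ⊆ Ioo (-s) s := fun d hd ↦
    abs_lt.1 (not_le.1 fun h ↦ hd (abelKernel_eq_zero (by rwa [abs_of_pos hs])))
  calc ∫⁻ d, abelKernel s d = ∫⁻ d in Ioo (-s) s, abelKernel s d :=
        (setLIntegral_eq_of_support_subset hsupp).symm
    _ = volume ((fun x ↦ Real.arcsin (x / s)) '' Ioo (-s) s) :=
        lintegral_deriv_eq_volume_image_of_monotoneOn measurableSet_Ioo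
          (fun d hd ↦ (hasDerivAt_arcsin_div hd).hasDerivWithinAt) hmono
    _ = ENNReal.ofReal π := by
        rw [image_arcsin_div hs, Real.volume_Ioo, sub_neg_eq_add, add_halves]

lemma lintegral_abelKernel_le (hs : 0 ≤ s) : ∫⁻ d, abelKernel s d ≤ ENNReal.ofReal π := by
  rcases hs.eq_or_lt with rfl | hs
  · simp only [abelKernel_eq_zero (abs_zero.trans_le (abs_nonneg _)), lintegral_zero, zero_le]
  · exact (lintegral_abelKernel hs).le

end AbelKernel

lemma mul_sq_sub_sq_le_cos_sub_cos {θ s : ℝ} (hθ : |θ| ≤ s) (hs : s + |θ| ≤ π) :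
    2 / π ^ 2 * (s ^ 2 - θ ^ 2) ≤ Real.cos θ - Real.cos s := by
  obtain ⟨hneg, hpos⟩ := abs_le.1 hθ
  have hadd : 2 / π * ((s + θ) / 2) ≤ Real.sin ((s + θ) / 2) :=
    Real.mul_le_sin (by linarith) (by linarith [le_abs_self θ])
  have hsub : 2 / π * ((s - θ) / 2) ≤ Real.sin ((s - θ) / 2) :=
    Real.mul_le_sin (by linarith) (by linarith [neg_abs_le θ])
  have hadd_nonneg : 0 ≤ 2 / π * ((s + θ) / 2) := mul_nonneg (by positivity) (by linarith)
  have hsub_nonneg : 0 ≤ 2 / π * ((s - θ) / 2) := mul_nonneg (by positivity) (by linarith)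
  calc 2 / π ^ 2 * (s ^ 2 - θ ^ 2)
      = 2 * ((2 / π * ((s + θ) / 2)) * (2 / π * ((s - θ) / 2))) := by ring
    _ ≤ 2 * (Real.sin ((s + θ) / 2) * Real.sin ((s - θ) / 2)) := by
        gcongr 2 * ?_
        exact mul_le_mul hadd hsub hsub_nonneg (hadd_nonneg.trans hadd)
    _ = Real.cos θ - Real.cos s := by
        rw [Real.cos_sub_cos, ← neg_sub s θ, neg_div, Real.sin_neg, add_comm θ s]
        ring

section Circle

variable {r t ρ θ : ℝ}

/-- Half the angle that the circle of radius `ρ` about the origin cuts out of a disk of radius `t`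
whose centre lies at distance `r` from the origin, by the law of cosines. If the circle misses the
disk because `t ≤ |ρ - r|`, then `Real.arccos` truncates to `0`. -/
noncomputable def arcHalfAngle (r t ρ : ℝ) : ℝ :=
  Real.arccos ((ρ ^ 2 + r ^ 2 - t ^ 2) / (2 * r * ρ))

lemma norm_circleMap_sub_ofReal_sq (r ρ θ : ℝ) :
    ‖circleMap 0 ρ θ - r‖ ^ 2 = ρ ^ 2 + r ^ 2 - 2 * r * ρ * Real.cos θ := by
  rw [← Complex.normSq_eq_norm_sq, Complex.normSq_sub, Complex.normSq_eq_norm_sq,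
    norm_circleMap_zero, sq_abs, Complex.normSq_ofReal, Complex.conj_ofReal,
    Complex.re_mul_ofReal, circleMap_zero, Complex.re_ofReal_mul, Complex.exp_ofReal_mul_I_re]
  ring

lemma abs_sub_le_norm_circleMap_sub_ofReal (hr : 0 ≤ r) (hρ : 0 ≤ ρ) :
    |ρ - r| ≤ ‖circleMap 0 ρ θ - r‖ := by
  simpa only [norm_circleMap_zero, Complex.norm_real, Real.norm_eq_abs, abs_of_nonneg hr,
    abs_of_nonneg hρ] using abs_norm_sub_norm_le (circleMap 0 ρ θ) (r : ℂ)

lemma abelKernel_norm_circleMap_sub_eq_zero (hr : 0 ≤ r) (hρ : 0 ≤ ρ) (ht : 0 ≤ t)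
    (hmiss : ρ ∉ Ioo (r - t) (r + t)) : abelKernel t ‖circleMap 0 ρ θ - r‖ = 0 := by
  have hgap : t ≤ |ρ - r| := not_lt.1 fun h ↦
    hmiss ⟨by linarith [(abs_lt.1 h).1], by linarith [(abs_lt.1 h).2]⟩
  refine abelKernel_eq_zero ?_
  rw [abs_of_nonneg ht, abs_norm]
  exact hgap.trans (abs_sub_le_norm_circleMap_sub_ofReal hr hρ)

lemma lawOfCosines_nonneg (hr : 0 ≤ r) (hρ : 0 ≤ ρ) (ht : |t| ≤ r) :
    0 ≤ (ρ ^ 2 + r ^ 2 - t ^ 2) / (2 * r * ρ) := by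
  have : t ^ 2 ≤ r ^ 2 := sq_le_sq.2 (ht.trans (le_abs_self r))
  exact div_nonneg (by nlinarith [sq_nonneg ρ]) (by positivity)

lemma arcHalfAngle_le_pi_div_two (hr : 0 ≤ r) (hρ : 0 ≤ ρ) (ht : |t| ≤ r) :
    arcHalfAngle r t ρ ≤ π / 2 :=
  Real.arccos_le_pi_div_two.2 (lawOfCosines_nonneg hr hρ ht)

lemma abs_lt_arcHalfAngle (hr : 0 < r) (hρ : 0 < ρ) (ht : |t| ≤ r) (hθ : |θ| ≤ π)
    (hdist : ‖circleMap 0 ρ θ - r‖ < |t|) : |θ| < arcHalfAngle r t ρ := by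
  have hsq : ρ ^ 2 + r ^ 2 - 2 * r * ρ * Real.cos θ < t ^ 2 := by
    rw [← norm_circleMap_sub_ofReal_sq, sq_lt_sq, abs_norm]
    exact hdist
  rw [arcHalfAngle, ← Real.arccos_cos (abs_nonneg θ) hθ, Real.cos_abs]
  refine Real.arccos_lt_arccos ?_ ?_ (Real.cos_le_one θ)
  · linarith [lawOfCosines_nonneg hr.le hρ.le ht]
  · rw [div_lt_iff₀ (by positivity)]
    linarith

lemma mul_cos_arcHalfAngle (hr : 0 < r) (hρ : 0 < ρ) (ht : |t| ≤ r)
    (hpos : 0 < arcHalfAngle r t ρ) :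
    2 * r * ρ * Real.cos (arcHalfAngle r t ρ) = ρ ^ 2 + r ^ 2 - t ^ 2 := by
  rw [arcHalfAngle, Real.cos_arccos (by linarith [lawOfCosines_nonneg hr.le hρ.le ht])
    (Real.arccos_pos.1 hpos).le]
  field_simp

lemma abelKernel_norm_circleMap_sub_le (hr : 0 < r) (hρ : 0 < ρ) (ht : |t| ≤ r) (hθ : |θ| ≤ π) :
    abelKernel t ‖circleMap 0 ρ θ - r‖ ≤
      ENNReal.ofReal (π / (2 * √(r * ρ))) * abelKernel (arcHalfAngle r t ρ) θ := by
  rcases le_or_gt |t| ‖circleMap 0 ρ θ - r‖ with houtside | hinside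
  · rw [abelKernel_eq_zero (by rwa [abs_norm])]
    exact zero_le
  · have harc := abs_lt_arcHalfAngle hr hρ ht hθ hinside
    have hconst : π / (2 * √(r * ρ)) = 1 / √((2 / π) ^ 2 * (r * ρ)) := by
      rw [Real.sqrt_mul (sq_nonneg _), Real.sqrt_sq (by positivity)]
      field_simp
    rw [hconst]
    refine abelKernel_le_mul_abelKernel (by positivity) harc ?_
    set s := arcHalfAngle r t ρ
    have hs : s ≤ π / 2 := arcHalfAngle_le_pi_div_two hr.le hρ.le ht
    calc (2 / π) ^ 2 * (r * ρ) * (s ^ 2 - θ ^ 2)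
        = 2 * r * ρ * (2 / π ^ 2 * (s ^ 2 - θ ^ 2)) := by ring
      _ ≤ 2 * r * ρ * (Real.cos θ - Real.cos s) := by
          gcongr
          exact mul_sq_sub_sq_le_cos_sub_cos harc.le (by linarith)
      _ = t ^ 2 - ‖circleMap 0 ρ θ - r‖ ^ 2 := by
          rw [mul_sub, mul_cos_arcHalfAngle hr hρ ht ((abs_nonneg θ).trans_lt harc),
            norm_circleMap_sub_ofReal_sq]
          ring

lemma lintegral_abelKernel_norm_circleMap_sub_le (hr : 0 < r) (hρ : 0 < ρ) (ht : |t| ≤ r) :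
    ∫⁻ θ in Ioo (-π) π, abelKernel t ‖circleMap 0 ρ θ - r‖ ≤
      ENNReal.ofReal (π ^ 2 / (2 * √(r * ρ))) := by
  calc ∫⁻ θ in Ioo (-π) π, abelKernel t ‖circleMap 0 ρ θ - r‖
      ≤ ∫⁻ θ in Ioo (-π) π,
          ENNReal.ofReal (π / (2 * √(r * ρ))) * abelKernel (arcHalfAngle r t ρ) θ :=
        setLIntegral_mono (by fun_prop) fun θ hθ ↦
          abelKernel_norm_circleMap_sub_le hr hρ ht (abs_lt.2 hθ).le
    _ ≤ ENNReal.ofReal (π / (2 * √(r * ρ))) * ∫⁻ θ, abelKernel (arcHalfAngle r t ρ) θ := by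
        rw [← lintegral_const_mul _ (by fun_prop)]
        exact setLIntegral_le_lintegral _ _
    _ ≤ ENNReal.ofReal (π / (2 * √(r * ρ))) * ENNReal.ofReal π := by
        gcongr
        exact lintegral_abelKernel_le (Real.arccos_nonneg _)
    _ = ENNReal.ofReal (π ^ 2 / (2 * √(r * ρ))) := by
        rw [← ENNReal.ofReal_mul (by positivity)]
        congr 1
        ring

end Circle

lemma lintegral_complex_eq_lintegral_circleMap {f : ℂ → ℝ≥0∞} (hf : Measurable f) :
    ∫⁻ z, f z =
      ∫⁻ ρ in Ioi (0 : ℝ), ENNReal.ofReal ρ * ∫⁻ θ in Ioo (-π) π, f (circleMap 0 ρ θ) := by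
  have hsymm (p : ℝ × ℝ) : Complex.polarCoord.symm p = circleMap 0 p.1 p.2 := by
    rw [Complex.polarCoord_symm_apply, circleMap_zero, Complex.exp_mul_I, Complex.ofReal_cos,
      Complex.ofReal_sin]
  have hcircle : Measurable fun p : ℝ × ℝ ↦ circleMap 0 p.1 p.2 := by
    unfold circleMap
    fun_prop
  simp_rw [← Complex.lintegral_comp_polarCoord_symm, polarCoord_target, hsymm, smul_eq_mul]
  rw [Measure.volume_eq_prod, setLIntegral_prod _ (by fun_prop)]
  simp_rw [lintegral_const_mul' _ _ ENNReal.ofReal_ne_top]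

lemma exists_linearIsometryEquiv_apply_eq {V W : Type*} [NormedAddCommGroup V]
    [InnerProductSpace ℝ V] [FiniteDimensional ℝ V] [NormedAddCommGroup W] [InnerProductSpace ℝ W]
    [FiniteDimensional ℝ W] (h : finrank ℝ V = finrank ℝ W) {v : V} {w : W} (hvw : ‖v‖ = ‖w‖) :
    ∃ f : V ≃ₗᵢ[ℝ] W, f v = w := by
  let e : V ≃ₗᵢ[ℝ] W :=
    (stdOrthonormalBasis ℝ V).equiv (stdOrthonormalBasis ℝ W) (finCongr h)
  exact ⟨e.trans (Submodule.reflection (Submodule.span ℝ {e v - w})ᗮ),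
    Submodule.reflection_sub (by rw [e.norm_map, hvw])⟩

lemma lintegral_radial_mul_abelKernel_complex_le {φ : ℝ → ℝ≥0∞} (hφ : Measurable φ) {r t : ℝ}
    (ht : 0 ≤ t) (hr : t < r) :
    ∫⁻ z : ℂ, φ ‖z‖ * abelKernel t ‖z - r‖ ≤
      ENNReal.ofReal (π ^ 2 / (2 * √r)) *
        ∫⁻ ρ in Ioo (r - t) (r + t), φ ρ * ENNReal.ofReal √ρ := by
  have hr_pos : 0 < r := ht.trans_lt hr
  have hcircle : ∀ ρ ∈ Ioi (0 : ℝ),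
      ENNReal.ofReal ρ * ∫⁻ θ in Ioo (-π) π,
          φ ‖circleMap 0 ρ θ‖ * abelKernel t ‖circleMap 0 ρ θ - r‖ ≤
        (Ioo (r - t) (r + t)).indicator
          (fun ρ ↦ ENNReal.ofReal (π ^ 2 / (2 * √r)) * (φ ρ * ENNReal.ofReal √ρ)) ρ := by
    intro ρ (hρ : 0 < ρ)
    simp_rw [norm_circleMap_zero, abs_of_pos hρ]
    rw [lintegral_const_mul _ (by fun_prop)]
    by_cases hmeet : ρ ∈ Ioo (r - t) (r + t)
    · have hconst : ρ * (π ^ 2 / (2 * √(r * ρ))) = π ^ 2 / (2 * √r) * √ρ := by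
        rw [Real.sqrt_mul hr_pos.le]
        nth_rw 1 [← Real.mul_self_sqrt hρ.le]
        field_simp
      rw [indicator_of_mem hmeet, mul_left_comm, mul_left_comm _ (φ ρ),
        ← ENNReal.ofReal_mul (by positivity), ← hconst, ENNReal.ofReal_mul hρ.le]
      gcongr
      exact lintegral_abelKernel_norm_circleMap_sub_le hr_pos hρ ((abs_of_nonneg ht).trans_le hr.le)
    · have hmiss (θ : ℝ) : abelKernel t ‖circleMap 0 ρ θ - r‖ = 0 :=
        abelKernel_norm_circleMap_sub_eq_zero hr_pos.le hρ.le ht hmeet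
      simp_rw [indicator_of_notMem hmeet, hmiss, lintegral_zero, mul_zero, le_refl]
  calc ∫⁻ z : ℂ, φ ‖z‖ * abelKernel t ‖z - r‖
      = ∫⁻ ρ in Ioi (0 : ℝ), ENNReal.ofReal ρ * ∫⁻ θ in Ioo (-π) π,
          φ ‖circleMap 0 ρ θ‖ * abelKernel t ‖circleMap 0 ρ θ - r‖ :=
        lintegral_complex_eq_lintegral_circleMap (by fun_prop)
    _ ≤ ∫⁻ ρ, (Ioo (r - t) (r + t)).indicator
          (fun ρ ↦ ENNReal.ofReal (π ^ 2 / (2 * √r)) * (φ ρ * ENNReal.ofReal √ρ)) ρ :=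
        (setLIntegral_mono' measurableSet_Ioi hcircle).trans (setLIntegral_le_lintegral _ _)
    _ = _ := by
        rw [lintegral_indicator measurableSet_Ioo, lintegral_const_mul _ (by fun_prop)]

lemma lintegral_Ioi_rpow {p a : ℝ} (hp : p < -1) (ha : 0 < a) :
    ∫⁻ ρ in Ioi a, ENNReal.ofReal (ρ ^ p) = ENNReal.ofReal (-a ^ (p + 1) / (p + 1)) := by
  rw [← integral_Ioi_rpow_of_lt hp ha,
    ofReal_integral_eq_lintegral_ofReal (integrableOn_Ioi_rpow_of_lt hp ha)]
  filter_upwards [ae_restrict_mem measurableSet_Ioi] with ρ hρ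
  exact Real.rpow_nonneg (ha.trans hρ).le p

lemma lintegral_Ioo_ofReal_mul_rpow_mul_sqrt_le {α A a b : ℝ} (hα : 0 < α) (ha : 0 < a) :
    ∫⁻ ρ in Ioo a b, ENNReal.ofReal (A * ρ ^ (-(3 / 2) - α)) * ENNReal.ofReal √ρ ≤
      ENNReal.ofReal (A * (a ^ (-α) / α)) := by
  have hpow : ∀ ρ ∈ Ioi a, ENNReal.ofReal (A * ρ ^ (-(3 / 2) - α)) * ENNReal.ofReal √ρ =
      ENNReal.ofReal A * ENNReal.ofReal (ρ ^ (-1 - α)) := by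
    intro ρ hρ
    have hρ_pos : 0 < ρ := ha.trans hρ
    rw [← ENNReal.ofReal_mul' (by positivity), ← ENNReal.ofReal_mul' (by positivity),
      Real.sqrt_eq_rpow, mul_assoc, ← Real.rpow_add hρ_pos]
    congr 3
    ring
  calc ∫⁻ ρ in Ioo a b, ENNReal.ofReal (A * ρ ^ (-(3 / 2) - α)) * ENNReal.ofReal √ρ
      ≤ ∫⁻ ρ in Ioi a, ENNReal.ofReal (A * ρ ^ (-(3 / 2) - α)) * ENNReal.ofReal √ρ :=
        lintegral_mono_set Ioo_subset_Ioi_self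
    _ = ENNReal.ofReal A * ENNReal.ofReal (-a ^ (-1 - α + 1) / (-1 - α + 1)) := by
        rw [setLIntegral_congr_fun measurableSet_Ioi hpow, lintegral_const_mul _ (by fun_prop),
          lintegral_Ioi_rpow (by linarith) ha]
    _ = ENNReal.ofReal (A * (a ^ (-α) / α)) := by
        rw [show -1 - α + 1 = -α by ring, neg_div_neg_eq, ← ENNReal.ofReal_mul' (by positivity)]

section Plane

variable {E : Type*} [NormedAddCommGroup E] [InnerProductSpace ℝ E] [FiniteDimensional ℝ E]
  [MeasurableSpace E] [BorelSpace E]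

lemma lintegral_radial_mul_abelKernel_le (hE : finrank ℝ E = 2) {φ : ℝ → ℝ≥0∞}
    (hφ : Measurable φ) {t : ℝ} {x : E} (ht : 0 ≤ t) (hx : t < ‖x‖) :
    ∫⁻ y, φ ‖y‖ * abelKernel t ‖y - x‖ ≤
      ENNReal.ofReal (π ^ 2 / (2 * √‖x‖)) *
        ∫⁻ ρ in Ioo (‖x‖ - t) (‖x‖ + t), φ ρ * ENNReal.ofReal √ρ := by
  obtain ⟨f, hf⟩ : ∃ f : ℂ ≃ₗᵢ[ℝ] E, f (‖x‖ : ℂ) = x :=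
    exists_linearIsometryEquiv_apply_eq (Complex.finrank_real_complex.trans hE.symm)
      (by rw [Complex.norm_real, norm_norm])
  have hpull (z : ℂ) : φ ‖f z‖ * abelKernel t ‖f z - x‖ =
      φ ‖z‖ * abelKernel t ‖z - (‖x‖ : ℂ)‖ := by
    rw [f.norm_map, ← f.norm_map (z - ‖x‖), map_sub, hf]
  rw [← f.measurePreserving.lintegral_comp_emb f.toMeasurableEquiv.measurableEmbedding]
  simp_rw [hpull]
  exact lintegral_radial_mul_abelKernel_complex_le hφ ht hx

theorem stmt_8_general {F : Type*} [SeminormedAddCommGroup F] (hE : finrank ℝ E = 2)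
    {α A t : ℝ} (hα : 0 < α) (ht : 0 ≤ t) {x : E} (hx : t < ‖x‖) {g : E → F}
    (hg : ∀ y ∈ ball x t, ‖g y‖ ≤ A * ‖y‖ ^ (-(3 / 2) - α)) :
    ENNReal.ofReal (1 / (2 * π)) *
        ∫⁻ y in ball x t, ENNReal.ofReal (‖g y‖ / √(t ^ 2 - ‖y - x‖ ^ 2)) ≤
      ENNReal.ofReal (π / (4 * α) * A * ‖x‖ ^ (-(1 / 2) : ℝ) * (‖x‖ - t) ^ (-α)) := by
  have hdist : 0 < ‖x‖ - t := sub_pos.2 hx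
  set φ : ℝ → ℝ≥0∞ := fun ρ ↦ ENNReal.ofReal (A * ρ ^ (-(3 / 2) - α))
  have hφ : Measurable φ := by fun_prop
  have hdom : ∀ y ∈ ball x t, ENNReal.ofReal (‖g y‖ / √(t ^ 2 - ‖y - x‖ ^ 2)) ≤
      φ ‖y‖ * abelKernel t ‖y - x‖ := fun y hy ↦ by
    rw [div_eq_mul_one_div, ENNReal.ofReal_mul (norm_nonneg _)]
    exact mul_le_mul_left (ENNReal.ofReal_le_ofReal (hg y hy)) _
  have hball : ∫⁻ y in ball x t, ENNReal.ofReal (‖g y‖ / √(t ^ 2 - ‖y - x‖ ^ 2)) ≤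
      ∫⁻ y, φ ‖y‖ * abelKernel t ‖y - x‖ :=
    (setLIntegral_mono' measurableSet_ball hdom).trans (setLIntegral_le_lintegral _ _)
  calc ENNReal.ofReal (1 / (2 * π)) *
        ∫⁻ y in ball x t, ENNReal.ofReal (‖g y‖ / √(t ^ 2 - ‖y - x‖ ^ 2))
      ≤ ENNReal.ofReal (1 / (2 * π)) * ∫⁻ y, φ ‖y‖ * abelKernel t ‖y - x‖ := by
        gcongr ENNReal.ofReal _ * ?_
    _ ≤ ENNReal.ofReal (1 / (2 * π)) * (ENNReal.ofReal (π ^ 2 / (2 * √‖x‖)) *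
          ENNReal.ofReal (A * ((‖x‖ - t) ^ (-α) / α))) := by
        gcongr
        exact (lintegral_radial_mul_abelKernel_le hE hφ ht hx).trans
          (mul_le_mul_right (lintegral_Ioo_ofReal_mul_rpow_mul_sqrt_le hα hdist) _)
    _ = ENNReal.ofReal (π / (4 * α) * A * ‖x‖ ^ (-(1 / 2) : ℝ) * (‖x‖ - t) ^ (-α)) := by
        rw [← ENNReal.ofReal_mul (by positivity), ← ENNReal.ofReal_mul (by positivity),
          Real.rpow_neg (norm_nonneg x), ← Real.sqrt_eq_rpow]
        congr 1
        field_simp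
        ring

end Plane

/-- The estimate of the term `I₂` in the proof of Lemma `lm1`: if
`|g(y)| ≤ A |y|^{-3/2-α}` for `|y| > R`, then
`(1/(2π)) ∫_{B(x,t)} |g(y)| / √(t² - |y-x|²) dy ≤ C A |x|^{-1/2} (|x| - t)^{-α}`
whenever `t > 0` and `|x| > R + t`, with `C` depending only on `α`. -/
theorem stmt_8 (α : ℝ) (hα : 0 < α) (hα' : α < 1 / 2) :
    ∃ C : ℝ, 0 < C ∧
      ∀ (R A : ℝ), 0 < R → 0 < A →
      ∀ g : EuclideanSpace ℝ (Fin 2) → ℝ, Measurable g →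
      (∀ y : EuclideanSpace ℝ (Fin 2), R < ‖y‖ → |g y| ≤ A * ‖y‖ ^ (-(3 / 2) - α)) →
      ∀ (t : ℝ) (x : EuclideanSpace ℝ (Fin 2)), 0 < t → R + t < ‖x‖ →
        ENNReal.ofReal (1 / (2 * Real.pi)) *
            ∫⁻ y in Metric.ball x t,
              ENNReal.ofReal (|g y| / Real.sqrt (t ^ 2 - ‖y - x‖ ^ 2)) ≤
          ENNReal.ofReal (C * A * ‖x‖ ^ (-(1 / 2) : ℝ) * (‖x‖ - t) ^ (-α)) := by
  refine ⟨π / (4 * α), by positivity, fun R A hR _ g _ hg t x ht hx ↦ ?_⟩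
  refine stmt_8_general (g := g) finrank_euclideanSpace_fin hα ht.le (by linarith) fun y hy ↦
    hg y ?_
  linarith [norm_sub_norm_le x y, mem_ball_iff_norm'.1 hy]
end
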